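/- Let β > 0, let (x_k)_{k≥1} be nonnegative differentiable functions on [0,∞) with x_k(0) = 0, and let (r_k)_{k≥1}, (α_k)_{k≥1} be constants with r_k ≥ 0 and α_k > 0, such that for every k ≥ 1 and every t ≥ 0 one has x_k'(t) ≤ β·k·(α_k·x_{k+1}(t) − x_k(t)) + r_k. Then for all integers j ≥ 1, ℓ ≥ 1 and all t ≥ 0: x_j(t) ≤ A^ℓ_j · I^ℓ_j(t) · sup_{s ∈ [0,t]} x_{j+ℓ}(s) + (1/β) · Σ_{k=0}^{ℓ-1} A^{k+1}_j · I^{k+1}_j(t) · r_{j+k} / (α_{j+k}·(j+k)), where A^k_j := Π_{i=j}^{j+k-1} α_i (with A^0_j := 1). -/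

import Mathlib

open MeasureTheory

/-- The nested integral `∫₀^t ∫₀^{s_ℓ} ⋯ ∫₀^{s_2} e^{-β(s_2+⋯+s_ℓ)} e^{a s_1} ds_1 ⋯ ds_ℓ`,
defined recursively in the number `ℓ` of integrations. -/
noncomputable def nestInt (β a : ℝ) : ℕ → ℝ → ℝ
  | 0, _ => 1
  | 1, t => ∫ s in (0:ℝ)..t, Real.exp (a * s)
  | (n + 2), t => ∫ s in (0:ℝ)..t, Real.exp (-β * s) * nestInt β a (n + 1) s

/-- The iterated exponential integral
`I^ℓ_j(t) = β^ℓ ((j+ℓ-1)!/(j-1)!) e^{-βjt} ∫₀^t ∫₀^{s_ℓ} ⋯ ∫₀^{s_2}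
e^{-β(s_2+⋯+s_ℓ)} e^{β(j+ℓ-1)s_1} ds_1 ⋯ ds_ℓ`, with `I^0_j(t) = 1`. -/
noncomputable def Iex (β : ℝ) (j ℓ : ℕ) (t : ℝ) : ℝ :=
  if ℓ = 0 then 1
  else β ^ ℓ * ((Nat.factorial (j + ℓ - 1) : ℝ) / (Nat.factorial (j - 1) : ℝ)) *
    Real.exp (-(β * j * t)) * nestInt β (β * ((j : ℝ) + (ℓ : ℝ) - 1)) ℓ t

lemma nestInt_cont (β a : ℝ) : ∀ n, Continuous (nestInt β a n)
  | 0 => by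
    have h : nestInt β a 0 = fun _ => 1 := by funext t; simp [nestInt]
    rw [h]; exact continuous_const
  | 1 => by
    have h : nestInt β a 1 = fun t => ∫ s in (0:ℝ)..t, Real.exp (a * s) := by
      funext t; simp only [nestInt]
    rw [h]
    exact intervalIntegral.continuous_primitive
      (fun _ _ => Continuous.intervalIntegrable (by fun_prop) _ _) 0
  | (n + 2) => by
    have h : nestInt β a (n + 2)
        = fun t => ∫ s in (0:ℝ)..t, Real.exp (-β * s) * nestInt β a (n + 1) s := by
      funext t; simp only [nestInt]
    have hc := nestInt_cont β a (n + 1)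
    rw [h]
    exact intervalIntegral.continuous_primitive
      (fun _ _ => Continuous.intervalIntegrable (by fun_prop) _ _) 0

lemma nestInt_deriv_one (β a t : ℝ) :
    HasDerivAt (nestInt β a 1) (Real.exp (a * t)) t := by
  have h : nestInt β a 1 = fun t => ∫ s in (0:ℝ)..t, Real.exp (a * s) := by
    funext t; simp only [nestInt]
  rw [h]
  have hc : Continuous fun s : ℝ => Real.exp (a * s) := by fun_prop
  exact hc.integral_hasStrictDerivAt 0 t |>.hasDerivAt

lemma nestInt_deriv_succ (β a t : ℝ) (n : ℕ) :
    HasDerivAt (nestInt β a (n + 2)) (Real.exp (-β * t) * nestInt β a (n + 1) t) t := by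
  have h : nestInt β a (n + 2)
      = fun t => ∫ s in (0:ℝ)..t, Real.exp (-β * s) * nestInt β a (n + 1) s := by
    funext t; simp only [nestInt]
  have hc' := nestInt_cont β a (n + 1)
  rw [h]
  have hc : Continuous fun s : ℝ => Real.exp (-β * s) * nestInt β a (n + 1) s := by fun_prop
  exact hc.integral_hasStrictDerivAt 0 t |>.hasDerivAt

lemma nestInt_zero (β a : ℝ) (n : ℕ) : nestInt β a (n + 1) 0 = 0 := by
  cases n <;> simp [nestInt]

lemma Iex_zero (β : ℝ) (j ℓ : ℕ) : Iex β j (ℓ + 1) 0 = 0 := by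
  simp [Iex, nestInt_zero]

lemma Iex_deriv (β : ℝ) (j ℓ : ℕ) (hj : 1 ≤ j) (t : ℝ) :
    HasDerivAt (Iex β j (ℓ + 1))
      (β * j * (Iex β (j + 1) ℓ t - Iex β j (ℓ + 1) t)) t := by
  obtain ⟨m, rfl⟩ : ∃ m, j = m + 1 := ⟨j - 1, by omega⟩
  have hf : ((m + 1).factorial : ℝ) = (m + 1) * m.factorial := by
    rw [Nat.factorial_succ]; push_cast; ring
  have hm : (m.factorial : ℝ) ≠ 0 := by positivity
  have hm1 : (m : ℝ) + 1 ≠ 0 := by positivity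
  have hE : HasDerivAt (fun t => Real.exp (-(β * ((m + 1 : ℕ) : ℝ) * t)))
      (Real.exp (-(β * ((m + 1 : ℕ) : ℝ) * t)) * (-(β * ((m + 1 : ℕ) : ℝ)))) t := by
    have h1 : HasDerivAt (fun t => -(β * ((m + 1 : ℕ) : ℝ) * t)) (-(β * ((m + 1 : ℕ) : ℝ))) t := by
      simpa using ((hasDerivAt_id t).const_mul (β * ((m + 1 : ℕ) : ℝ))).fun_neg
    exact h1.exp
  have hfun : Iex β (m + 1) (ℓ + 1) = fun t =>
      β ^ (ℓ + 1) * ((Nat.factorial (m + 1 + (ℓ + 1) - 1) : ℝ) / (Nat.factorial (m + 1 - 1) : ℝ)) *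
      Real.exp (-(β * ((m + 1 : ℕ) : ℝ) * t)) *
      nestInt β (β * (((m + 1 : ℕ) : ℝ) + ((ℓ + 1 : ℕ) : ℝ) - 1)) (ℓ + 1) t := by
    funext t; simp [Iex]
  rw [hfun]
  cases ℓ with
  | zero =>
    have hN := nestInt_deriv_one β (β * (((m + 1 : ℕ) : ℝ) + ((0 + 1 : ℕ) : ℝ) - 1)) t
    have := (hE.const_mul (β ^ (0 + 1) *
      ((Nat.factorial (m + 1 + (0 + 1) - 1) : ℝ) / (Nat.factorial (m + 1 - 1) : ℝ)))).mul hN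
    refine this.congr_deriv ?_
    have he : Real.exp (-(β * ((m + 1 : ℕ) : ℝ) * t)) *
        Real.exp (β * (((m + 1 : ℕ) : ℝ) + ((0 + 1 : ℕ) : ℝ) - 1) * t) = 1 := by
      rw [← Real.exp_add, Real.exp_eq_one_iff]; push_cast; ring
    have hc : ((Nat.factorial (m + 1 + (0 + 1) - 1) : ℝ) / (Nat.factorial (m + 1 - 1) : ℝ))
        = ((m + 1 : ℕ) : ℝ) := by
      have h1 : m + 1 + (0 + 1) - 1 = m + 1 := by omega
      have h2 : m + 1 - 1 = m := by omega
      rw [h1, h2, hf]; push_cast; field_simp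
    rw [mul_assoc (β ^ (0 + 1) * _) _ (Real.exp (β * _ * t)), he, hc]
    simp only [Iex, if_true]
    simp only [zero_add, pow_one]
    ring
  | succ n =>
    have hN := nestInt_deriv_succ β
      (β * (((m + 1 : ℕ) : ℝ) + ((n + 1 + 1 : ℕ) : ℝ) - 1)) t n
    have := (hE.const_mul (β ^ (n + 1 + 1) *
      ((Nat.factorial (m + 1 + (n + 1 + 1) - 1) : ℝ) / (Nat.factorial (m + 1 - 1) : ℝ)))).mul hN
    refine this.congr_deriv ?_
    have h1 : m + 1 + 1 + (n + 1) - 1 = m + 1 + (n + 1 + 1) - 1 := by omega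
    have h2 : m + 1 + 1 - 1 = m + 1 := by omega
    have h3 : m + 1 - 1 = m := by omega
    have ha : β * (((m + 1 + 1 : ℕ) : ℝ) + ((n + 1 : ℕ) : ℝ) - 1)
        = β * (((m + 1 : ℕ) : ℝ) + ((n + 1 + 1 : ℕ) : ℝ) - 1) := by push_cast; ring
    have he : Real.exp (-(β * ((m + 1 + 1 : ℕ) : ℝ) * t))
        = Real.exp (-(β * ((m + 1 : ℕ) : ℝ) * t)) * Real.exp (-β * t) := by
      rw [← Real.exp_add]; congr 1; push_cast; ring
    simp only [Iex, Nat.succ_ne_zero, if_false, Nat.add_eq_zero_iff, one_ne_zero, and_false]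
    rw [ha, he, h1, h2, h3, hf]
    generalize nestInt β (β * (((m + 1 : ℕ) : ℝ) + ((n + 1 + 1 : ℕ) : ℝ) - 1)) (n + 1) t = N1
    generalize nestInt β (β * (((m + 1 : ℕ) : ℝ) + ((n + 1 + 1 : ℕ) : ℝ) - 1)) (n + 1 + 1) t = N2
    generalize Real.exp (-(β * ((m + 1 : ℕ) : ℝ) * t)) = E1
    generalize Real.exp (-β * t) = E2
    generalize ((m + 1 + (n + 1 + 1) - 1).factorial : ℝ) = F
    push_cast
    field_simp
    ring

/-- The right-hand side with `M` in place of the supremum. -/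
noncomputable def Bnd (β : ℝ) (r α : ℕ → ℝ) (M : ℝ) (j ℓ : ℕ) (t : ℝ) : ℝ :=
  (∏ i ∈ Finset.range ℓ, α (j + i)) * Iex β j ℓ t * M
      + (1 / β) * ∑ k ∈ Finset.range ℓ,
          (∏ i ∈ Finset.range (k + 1), α (j + i)) * Iex β j (k + 1) t *
            (r (j + k) / (α (j + k) * ((j : ℝ) + k)))

lemma prod_shift (α : ℕ → ℝ) (j n : ℕ) :
    ∏ i ∈ Finset.range (n + 1), α (j + i)
      = α j * ∏ i ∈ Finset.range n, α (j + 1 + i) := by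
  rw [Finset.prod_range_succ', mul_comm]
  simp only [add_zero]
  congr 1
  refine Finset.prod_congr rfl fun i _ => ?_
  congr 1; omega

lemma Bnd_deriv (β : ℝ) (hβ : 0 < β) (r α : ℕ → ℝ) (M : ℝ) (j ℓ : ℕ) (hj : 1 ≤ j)
    (hα : 0 < α j) (t : ℝ) :
    HasDerivAt (Bnd β r α M j (ℓ + 1))
      (β * j * (α j * Bnd β r α M (j + 1) ℓ t - Bnd β r α M j (ℓ + 1) t) + r j) t := by
  have hS : HasDerivAt (fun t => ∑ k ∈ Finset.range (ℓ + 1),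
          (∏ i ∈ Finset.range (k + 1), α (j + i)) * Iex β j (k + 1) t *
            (r (j + k) / (α (j + k) * ((j : ℝ) + k))))
      (∑ k ∈ Finset.range (ℓ + 1),
          (∏ i ∈ Finset.range (k + 1), α (j + i)) *
            (β * j * (Iex β (j + 1) k t - Iex β j (k + 1) t)) *
            (r (j + k) / (α (j + k) * ((j : ℝ) + k)))) t :=
    HasDerivAt.fun_sum fun k _ => ((Iex_deriv β j k hj t).const_mul _).mul_const _
  have h := (((Iex_deriv β j ℓ hj t).const_mul
    (∏ i ∈ Finset.range (ℓ + 1), α (j + i))).mul_const M).add (hS.const_mul (1 / β))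
  refine HasDerivAt.congr_deriv h ?_
  have hj0 : (j : ℝ) ≠ 0 := by positivity
  have key : ∑ k ∈ Finset.range (ℓ + 1),
          (∏ i ∈ Finset.range (k + 1), α (j + i)) *
            (β * j * (Iex β (j + 1) k t - Iex β j (k + 1) t)) *
            (r (j + k) / (α (j + k) * ((j : ℝ) + k)))
      = β * j * (α j * ∑ k ∈ Finset.range ℓ,
          (∏ i ∈ Finset.range (k + 1), α (j + 1 + i)) * Iex β (j + 1) (k + 1) t *
            (r (j + 1 + k) / (α (j + 1 + k) * (((j + 1 : ℕ) : ℝ) + k)))) + β * r j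
        - β * j * ∑ k ∈ Finset.range (ℓ + 1),
          (∏ i ∈ Finset.range (k + 1), α (j + i)) * Iex β j (k + 1) t *
            (r (j + k) / (α (j + k) * ((j : ℝ) + k))) := by
    have e1 : ∑ k ∈ Finset.range (ℓ + 1),
          (∏ i ∈ Finset.range (k + 1), α (j + i)) *
            (β * j * (Iex β (j + 1) k t - Iex β j (k + 1) t)) *
            (r (j + k) / (α (j + k) * ((j : ℝ) + k)))
        = β * j * (∑ k ∈ Finset.range (ℓ + 1),
          (∏ i ∈ Finset.range (k + 1), α (j + i)) * Iex β (j + 1) k t *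
            (r (j + k) / (α (j + k) * ((j : ℝ) + k))))
        - β * j * ∑ k ∈ Finset.range (ℓ + 1),
          (∏ i ∈ Finset.range (k + 1), α (j + i)) * Iex β j (k + 1) t *
            (r (j + k) / (α (j + k) * ((j : ℝ) + k))) := by
      rw [Finset.mul_sum, Finset.mul_sum, ← Finset.sum_sub_distrib]
      exact Finset.sum_congr rfl fun k _ => by ring
    rw [e1]
    congr 1
    rw [Finset.sum_range_succ', mul_add]
    congr 1
    · congr 1
      rw [Finset.mul_sum]
      refine Finset.sum_congr rfl fun k _ => ?_
      rw [prod_shift α j (k + 1), show j + (k + 1) = j + 1 + k by omega]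
      have : (j : ℝ) + ((k + 1 : ℕ) : ℝ) = ((j + 1 : ℕ) : ℝ) + k := by push_cast; ring
      rw [this]; ring
    · have := hα.ne'
      simp [Iex]
      field_simp
  rw [key]
  simp only [Bnd]
  rw [prod_shift α j ℓ]
  field_simp
  ring

lemma Bnd_zero (β : ℝ) (r α : ℕ → ℝ) (M : ℝ) (j ℓ : ℕ) : Bnd β r α M j (ℓ + 1) 0 = 0 := by
  simp [Bnd, Iex_zero]

lemma hierarchy_aux (β : ℝ) (hβ : 0 < β) (x x' : ℕ → ℝ → ℝ) (r α : ℕ → ℝ)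
    (hx0 : ∀ k, 1 ≤ k → x k 0 = 0)
    (hα : ∀ k, 1 ≤ k → 0 < α k)
    (hderiv : ∀ k, 1 ≤ k → ∀ t : ℝ, 0 ≤ t → HasDerivWithinAt (x k) (x' k t) (Set.Ici 0) t)
    (hineq : ∀ k, 1 ≤ k → ∀ t : ℝ, 0 ≤ t →
      x' k t ≤ β * k * (α k * x (k + 1) t - x k t) + r k)
    (M T : ℝ) (ℓ : ℕ) : ∀ j, 1 ≤ j → (∀ s ∈ Set.Icc 0 T, x (j + ℓ) s ≤ M) →
    ∀ s ∈ Set.Icc 0 T, x j s ≤ Bnd β r α M j ℓ s := by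
  induction ℓ with
  | zero => intro j hj h s hs; simpa [Bnd, Iex] using h s hs
  | succ ℓ ih =>
    intro j hj h
    have ih' := ih (j + 1) (by omega) (by
      intro s hs; rw [show j + 1 + ℓ = j + (ℓ + 1) by omega]; exact h s hs)
    set D : ℝ → ℝ := fun s => Real.exp (β * j * s) * (Bnd β r α M j (ℓ + 1) s - x j s) with hD
    have hE : ∀ s : ℝ, HasDerivAt (fun s => Real.exp (β * j * s))
        (Real.exp (β * j * s) * (β * j)) s := by
      intro s
      have h1 : HasDerivAt (fun s => β * (j : ℝ) * s) (β * j) s := by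
        simpa using (hasDerivAt_id s).const_mul (β * (j : ℝ))
      exact h1.exp
    have hDd : ∀ s, 0 ≤ s → HasDerivWithinAt D
        (Real.exp (β * j * s) * (β * j) * (Bnd β r α M j (ℓ + 1) s - x j s)
          + Real.exp (β * j * s) *
            (β * j * (α j * Bnd β r α M (j + 1) ℓ s - Bnd β r α M j (ℓ + 1) s) + r j - x' j s))
        (Set.Ici 0) s := fun s hs =>
      (hE s).hasDerivWithinAt.mul
        ((Bnd_deriv β hβ r α M j ℓ hj (hα j hj) s).hasDerivWithinAt.sub (hderiv j hj s hs))
    have hmono : MonotoneOn D (Set.Icc 0 T) := by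
      refine monotoneOn_of_hasDerivWithinAt_nonneg (convex_Icc 0 T) ?_ (fun s hs => ?_) (fun s hs => ?_)
        (f' := fun s => (Real.exp (β * j * s) * (β * j) * (Bnd β r α M j (ℓ + 1) s - x j s)
          + Real.exp (β * j * s) *
            (β * j * (α j * Bnd β r α M (j + 1) ℓ s - Bnd β r α M j (ℓ + 1) s) + r j - x' j s)))
      · exact fun s hs => ((hDd s hs.1).continuousWithinAt).mono Set.Icc_subset_Ici_self
      · have hs' := interior_subset hs
        exact (hDd s hs'.1).mono (interior_subset.trans Set.Icc_subset_Ici_self)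
      · have hs' := interior_subset hs
        have h1 := hineq j hj s hs'.1
        have h2 : β * j * (α j * x (j + 1) s) ≤ β * j * (α j * Bnd β r α M (j + 1) ℓ s) :=
          mul_le_mul_of_nonneg_left
            (mul_le_mul_of_nonneg_left (ih' s hs') (hα j hj).le) (by positivity)
        have h3 : 0 ≤ β * j * (Bnd β r α M j (ℓ + 1) s - x j s) +
          (β * j * (α j * Bnd β r α M (j + 1) ℓ s - Bnd β r α M j (ℓ + 1) s) + r j - x' j s) := by
          linarith
        have h4 := mul_nonneg (Real.exp_pos (β * j * s)).le h3
        beta_reduce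
        linarith
    intro s hs
    have h0 := hmono (Set.left_mem_Icc.2 (hs.1.trans hs.2)) hs hs.1
    simp only [hD, Bnd_zero, hx0 j hj, sub_zero, mul_zero] at h0
    have := nonneg_of_mul_nonneg_right h0 (Real.exp_pos _)
    linarith

/-- Gronwall-type estimate for the ODE hierarchy
`x_k' ≤ βk(α_k x_{k+1} − x_k) + r_k`, `x_k(0) = 0`: for all `j, ℓ ≥ 1` and `t ≥ 0`,
`x_j(t) ≤ A^ℓ_j I^ℓ_j(t) sup_{[0,t]} x_{j+ℓ}
  + (1/β) Σ_{k=0}^{ℓ-1} A^{k+1}_j I^{k+1}_j(t) r_{j+k}/(α_{j+k}(j+k))`,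
where `A^k_j = Π_{i=j}^{j+k-1} α_i`. -/
theorem ode_hierarchy_bound (β : ℝ) (hβ : 0 < β) (x x' : ℕ → ℝ → ℝ) (r α : ℕ → ℝ)
    (hx0 : ∀ k, 1 ≤ k → x k 0 = 0)
    (hxnonneg : ∀ k, 1 ≤ k → ∀ t : ℝ, 0 ≤ t → 0 ≤ x k t)
    (hr : ∀ k, 1 ≤ k → 0 ≤ r k)
    (hα : ∀ k, 1 ≤ k → 0 < α k)
    (hderiv : ∀ k, 1 ≤ k → ∀ t : ℝ, 0 ≤ t → HasDerivWithinAt (x k) (x' k t) (Set.Ici 0) t)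
    (hineq : ∀ k, 1 ≤ k → ∀ t : ℝ, 0 ≤ t →
      x' k t ≤ β * k * (α k * x (k + 1) t - x k t) + r k)
    (j ℓ : ℕ) (hj : 1 ≤ j) (hℓ : 1 ≤ ℓ) (t : ℝ) (ht : 0 ≤ t) :
    x j t ≤ (∏ i ∈ Finset.range ℓ, α (j + i)) * Iex β j ℓ t *
        sSup (x (j + ℓ) '' Set.Icc 0 t)
      + (1 / β) * ∑ k ∈ Finset.range ℓ,
          (∏ i ∈ Finset.range (k + 1), α (j + i)) * Iex β j (k + 1) t *
            (r (j + k) / (α (j + k) * ((j : ℝ) + k))) := by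
  have hc : ContinuousOn (x (j + ℓ)) (Set.Icc 0 t) := fun s hs =>
    ((hderiv (j + ℓ) (by omega) s hs.1).continuousWithinAt).mono Set.Icc_subset_Ici_self
  have hb : BddAbove (x (j + ℓ) '' Set.Icc 0 t) := (isCompact_Icc.image_of_continuousOn hc).bddAbove
  exact hierarchy_aux β hβ x x' r α hx0 hα hderiv hineq
    (sSup (x (j + ℓ) '' Set.Icc 0 t)) t ℓ j hj
    (fun s hs => le_csSup hb (Set.mem_image_of_mem _ hs)) t ⟨ht, le_rfl⟩
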